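/- arXiv:math/0609644 — 2 statements merged into one kernel-verified Lean document; each statement's English description precedes it below -/
import Mathlib

section
/- For every n ≥ 2, |S_{Y_n}(321)| = c_n − 1. -/
/-!
If the last entry of a pattern `τ` is its minimum, then the only cell of an occurrence of `τ` that
could leave a Young diagram `Y` is the one in its last column and lowest row. That cell carries the
last dot of the occurrence, so a transversal contains `τ` in `Y` exactly when it contains `τ`
classically. Hence the avoiders counted by `S_{Y_n}(321)` are the classical `321`-avoiders that do
not end in their minimum, and a `321`-avoider that does end in its minimum increases before that,
so it is `2 3 … n 1`.

To see that there are `c_n` classical `321`-avoiders, let `N n k` be the number of those in which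
the values `0, …, k - 1` occur from left to right in increasing order. If the first entry is `c`,
then what follows is an arbitrary avoider in which the values below `c` are in increasing order,
whence `N (n + 1) (k + 1) = N n k + ∑_{k ≤ c < n} N n (c + 1)`. Subtracting consecutive cases leaves
`N (n + 1) (k + 1) = N n k + N (n + 1) (k + 2)`, the recursion of Catalan's triangle with `n - k` as
second index.
-/

open Equiv

/-- `π` is a transversal of the Young diagram with row lengths `b` (zero-indexed:
the row at height `h` has `b h` cells, i.e. column `i` (1-indexed `i+1`) lies in that row
iff `(i:ℕ)+1 ≤ b h`). -/
def IsTransversal {n : ℕ} (b : Fin n → ℕ) (π : Equiv.Perm (Fin n)) : Prop :=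
  ∀ i : Fin n, (i : ℕ) + 1 ≤ b (π i)

/-- The transversal `π` contains the pattern `τ` inside the Young diagram `b`:
there are columns `f 0 < f 1 < …` whose dots are in the relative order prescribed by `τ`
and all rows and columns through these dots intersect inside the diagram. -/
def ContainsIn {n k : ℕ} (b : Fin n → ℕ) (π : Equiv.Perm (Fin n))
    (τ : Equiv.Perm (Fin k)) : Prop :=
  ∃ f : Fin k → Fin n, StrictMono f ∧
    (∀ s t : Fin k, τ s < τ t ↔ π (f s) < π (f t)) ∧
    (∀ s t : Fin k, (f s : ℕ) + 1 ≤ b (π (f t)))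

/-- `|S_Y(τ)|`: the number of transversals of the Young diagram `b` avoiding `τ` in `Y`. -/
noncomputable def SYcard {n k : ℕ} (b : Fin n → ℕ) (τ : Equiv.Perm (Fin k)) : ℕ :=
  Nat.card {π : Equiv.Perm (Fin n) // IsTransversal b π ∧ ¬ ContainsIn b π τ}

/-- Classical pattern containment for permutations. -/
def ContainsPat {n k : ℕ} (π : Equiv.Perm (Fin n)) (τ : Equiv.Perm (Fin k)) : Prop :=
  ∃ f : Fin k → Fin n, StrictMono f ∧ ∀ s t : Fin k, τ s < τ t ↔ π (f s) < π (f t)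

/-- `|S_n(τ)|`: the number of permutations of length `n` avoiding `τ`. -/
noncomputable def SnCard (n : ℕ) {k : ℕ} (τ : Equiv.Perm (Fin k)) : ℕ :=
  Nat.card {π : Equiv.Perm (Fin n) // ¬ ContainsPat π τ}

def p123 : Equiv.Perm (Fin 3) := Equiv.refl _
def p213 : Equiv.Perm (Fin 3) :=
  ⟨![1, 0, 2], ![1, 0, 2], by intro x; fin_cases x <;> rfl, by intro x; fin_cases x <;> rfl⟩
def p312 : Equiv.Perm (Fin 3) :=
  ⟨![2, 0, 1], ![1, 2, 0], by intro x; fin_cases x <;> rfl, by intro x; fin_cases x <;> rfl⟩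
def p321 : Equiv.Perm (Fin 3) :=
  ⟨![2, 1, 0], ![2, 1, 0], by intro x; fin_cases x <;> rfl, by intro x; fin_cases x <;> rfl⟩

/-- `(σ|τ)`: the block sum with the block of `σ` before and entirely above the block of `τ`. -/
def blockSum {m k : ℕ} (σ : Equiv.Perm (Fin m)) (τ : Equiv.Perm (Fin k)) :
    Equiv.Perm (Fin (m + k)) :=
  finSumFinEquiv.symm.trans ((((Equiv.sumCongr σ τ).trans
    (Equiv.sumComm (Fin m) (Fin k))).trans finSumFinEquiv).trans
    (finCongr (Nat.add_comm k m)))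

/-- `|S_{↘Y}(τ)|`: avoiders whose two leftmost entries are decreasing. -/
noncomputable def SYcardLeftDesc {m k : ℕ} (b : Fin m → ℕ) (τ : Equiv.Perm (Fin k)) : ℕ :=
  Nat.card {π : Equiv.Perm (Fin m) // IsTransversal b π ∧ ¬ ContainsIn b π τ ∧
    ∀ i j : Fin m, (i : ℕ) = 0 → (j : ℕ) = 1 → π j < π i}

/-- `|S_{↗Y}(τ)|`: avoiders whose two leftmost entries are increasing. -/
noncomputable def SYcardLeftAsc {m k : ℕ} (b : Fin m → ℕ) (τ : Equiv.Perm (Fin k)) : ℕ :=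
  Nat.card {π : Equiv.Perm (Fin m) // IsTransversal b π ∧ ¬ ContainsIn b π τ ∧
    ∀ i j : Fin m, (i : ℕ) = 0 → (j : ℕ) = 1 → π i < π j}

/-- `|S^{↘}_Y(τ)|`: avoiders in which the value `m` occurs to the left of the value `m-1`. -/
noncomputable def SYcardTopDesc {m k : ℕ} (b : Fin m → ℕ) (τ : Equiv.Perm (Fin k)) : ℕ :=
  Nat.card {π : Equiv.Perm (Fin m) // IsTransversal b π ∧ ¬ ContainsIn b π τ ∧
    ∀ u v : Fin m, (u : ℕ) + 1 = m → (v : ℕ) + 2 = m → π⁻¹ u < π⁻¹ v}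

/-- `|S^{↗}_Y(τ)|`: avoiders in which the value `m-1` occurs to the left of the value `m`. -/
noncomputable def SYcardTopAsc {m k : ℕ} (b : Fin m → ℕ) (τ : Equiv.Perm (Fin k)) : ℕ :=
  Nat.card {π : Equiv.Perm (Fin m) // IsTransversal b π ∧ ¬ ContainsIn b π τ ∧
    ∀ u v : Fin m, (u : ℕ) + 1 = m → (v : ℕ) + 2 = m → π⁻¹ v < π⁻¹ u}

/-- The Young diagram `Y_n`: the square `M_n` minus its bottom-right cell. -/
def bYn (n : ℕ) : Fin n → ℕ := fun y => if (y : ℕ) = 0 then n - 1 else n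

variable {n k m : ℕ}

/-! ### Occurrences of `321` -/

theorem containsPat_p321_iff {π : Perm (Fin n)} :
    ContainsPat π p321 ↔ ∃ i j l, i < j ∧ j < l ∧ π l < π j ∧ π j < π i := by
  constructor
  · rintro ⟨f, hf, hp⟩
    exact ⟨f 0, f 1, f 2, hf (by decide), hf (by decide),
      (hp 2 1).1 (by decide), (hp 1 0).1 (by decide)⟩
  · rintro ⟨i, j, l, hij, hjl, hlj, hji⟩
    refine ⟨![i, j, l], Fin.strictMono_iff_lt_succ.2 ?_, ?_⟩
    · simp [Fin.forall_fin_succ, hij, hjl]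
    · simp [Fin.forall_fin_succ, p321, hlj, hji, hlj.trans hji, hlj.le, hji.le,
        (hlj.trans hji).le]

theorem containsIn_iff_containsPat_of_apply_last_eq_zero {b : Fin n → ℕ} (hb : Monotone b)
    {π : Perm (Fin n)} (hπ : IsTransversal b π) {τ : Perm (Fin (k + 1))}
    (hτ : τ (Fin.last k) = 0) : ContainsIn b π τ ↔ ContainsPat π τ := by
  refine exists_congr fun f => and_congr_right fun hf => and_iff_left_of_imp fun hp s t => ?_
  have last_lowest : π (f (Fin.last k)) ≤ π (f t) := by
    rw [← not_lt, ← hp, hτ]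
    exact Fin.not_lt_zero _
  calc (f s : ℕ) + 1 ≤ f (Fin.last k) + 1 := by gcongr; exact hf.monotone (Fin.le_last s)
    _ ≤ b (π (f (Fin.last k))) := hπ _
    _ ≤ b (π (f t)) := hb last_lowest

/-! ### Prepending an entry -/

/-- The permutation with first entry `c` whose remaining entries are in the same relative order as
those of `σ`; it decomposes permutations according to their first entry. -/
def consPerm (c : Fin (n + 1)) (σ : Perm (Fin n)) : Perm (Fin (n + 1)) :=
  ((finSuccEquiv' 0).trans (optionCongr σ)).trans (finSuccEquiv' c).symm

@[simp]
theorem consPerm_zero (c : Fin (n + 1)) (σ : Perm (Fin n)) : consPerm c σ 0 = c := by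
  simp [consPerm]

@[simp]
theorem consPerm_succ (c : Fin (n + 1)) (σ : Perm (Fin n)) (i : Fin n) :
    consPerm c σ i.succ = c.succAbove (σ i) := by
  simp [consPerm, finSuccEquiv'_above (Fin.zero_le i.castSucc)]

theorem consPerm_injective2 : Function.Injective2 (consPerm (n := n)) := by
  intro c d σ τ h
  obtain rfl : c = d := by simpa using DFunLike.congr_fun h 0
  refine ⟨rfl, Equiv.ext fun i => ?_⟩
  simpa using DFunLike.congr_fun h i.succ

theorem consPerm_bijective : Function.Bijective (Function.uncurry (consPerm (n := n))) := by
  rw [Fintype.bijective_iff_injective_and_card]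
  exact ⟨consPerm_injective2.uncurry, by simp [Fintype.card_perm, Nat.factorial_succ]⟩

theorem card_subtype_eq_sum_consPerm (P : Perm (Fin (n + 1)) → Prop) :
    Nat.card {π // P π} = ∑ c, Nat.card {σ // P (consPerm c σ)} := by
  rw [← Nat.card_sigma]
  exact Nat.card_congr <|
    ((Equiv.ofBijective _ consPerm_bijective).subtypeEquiv fun _ => Iff.rfl).symm.trans
      (subtypeProdEquivSigmaSubtype fun c σ => P (consPerm c σ))

/-- The values `0, …, k - 1` occur in `π` from left to right in increasing order, stated as: no
inversion of `π` has its larger value below `k`. This is the statistic that refines the count of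
`321`-avoiders. -/
def SortedBelow (k : ℕ) (π : Perm (Fin n)) : Prop :=
  ∀ ⦃i j⦄, i < j → π j < π i → k ≤ π i

theorem SortedBelow.anti {l : ℕ} {π : Perm (Fin n)} (hlk : l ≤ k) (h : SortedBelow k π) :
    SortedBelow l π :=
  fun _ _ hij hji => hlk.trans (h hij hji)

theorem sortedBelow_zero (π : Perm (Fin n)) : SortedBelow 0 π := fun _ _ _ _ => Nat.zero_le _

theorem sortedBelow_one (π : Perm (Fin n)) : SortedBelow 1 π :=
  fun _ _ _ hji => Nat.one_le_iff_ne_zero.2 (Nat.ne_zero_of_lt hji)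

theorem sortedBelow_succ_consPerm_zero {σ : Perm (Fin n)} :
    SortedBelow (k + 1) (consPerm 0 σ) ↔ SortedBelow k σ := by
  simp [SortedBelow, Fin.forall_fin_succ]

theorem sortedBelow_consPerm_succ {c : Fin n} {σ : Perm (Fin n)} :
    SortedBelow k (consPerm c.succ σ) ↔ k ≤ (c : ℕ) + 1 ∧ SortedBelow k σ := by
  have le_val_succAbove (hk : k ≤ (c : ℕ) + 1) (x : Fin n) :
      k ≤ (c.succ.succAbove x : ℕ) ↔ k ≤ (x : ℕ) := by
    grind [Fin.succAbove, Fin.val_castSucc, Fin.lt_def]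
  -- The value `0` lies to the right of `c.succ`.
  have first_le : SortedBelow k (consPerm c.succ σ) → k ≤ (c : ℕ) + 1 := fun h => by
    have : NeZero n := c.neZero
    simpa using h (Fin.succ_pos (σ.symm 0)) (by simp)
  rw [← and_iff_right_of_imp first_le]
  refine and_congr_right fun hk => ?_
  simp [SortedBelow, Fin.forall_fin_succ, Fin.val_succ, hk, le_val_succAbove]

theorem containsPat_p321_consPerm {c : Fin (n + 1)} {σ : Perm (Fin n)} :
    ContainsPat (consPerm c σ) p321 ↔ ¬ SortedBelow c σ ∨ ContainsPat σ p321 := by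
  have succAbove_lt (x : Fin n) : c.succAbove x < c ↔ (x : ℕ) < c :=
    Fin.succAbove_lt_iff_castSucc_lt c x
  simp [containsPat_p321_iff, SortedBelow, Fin.exists_fin_succ, succAbove_lt]

/-! ### Counting `321`-avoiders -/

/-- The number of `321`-avoiders of length `n` in which the values `0, …, k - 1` occur in
increasing order. -/
noncomputable def sortedAvoiderCard (n k : ℕ) : ℕ :=
  Nat.card {π : Perm (Fin n) // ¬ ContainsPat π p321 ∧ SortedBelow k π}

theorem snCard_p321_eq_sortedAvoiderCard : SnCard n p321 = sortedAvoiderCard n 0 := by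
  simp [SnCard, sortedAvoiderCard, sortedBelow_zero]

theorem sortedAvoiderCard_one : sortedAvoiderCard n 1 = sortedAvoiderCard n 0 := by
  simp [sortedAvoiderCard, sortedBelow_zero, sortedBelow_one]

theorem sortedAvoiderCard_succ_succ_eq_sum :
    sortedAvoiderCard (n + 1) (k + 1) =
      sortedAvoiderCard n k + ∑ c ∈ Finset.Ico k n, sortedAvoiderCard n (c + 1) := by
  have first_zero (σ : Perm (Fin n)) :
      ¬ ContainsPat (consPerm 0 σ) p321 ∧ SortedBelow (k + 1) (consPerm 0 σ) ↔
        ¬ ContainsPat σ p321 ∧ SortedBelow k σ := by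
    simp [containsPat_p321_consPerm, sortedBelow_zero, sortedBelow_succ_consPerm_zero]
  have first_succ (c : Fin n) (σ : Perm (Fin n)) :
      ¬ ContainsPat (consPerm c.succ σ) p321 ∧ SortedBelow (k + 1) (consPerm c.succ σ) ↔
        k ≤ c ∧ ¬ ContainsPat σ p321 ∧ SortedBelow (c + 1) σ := by
    rw [containsPat_p321_consPerm, sortedBelow_consPerm_succ, Fin.val_succ]
    have := SortedBelow.anti (k := c + 1) (l := k + 1) (π := σ)
    grind
  have card_first_succ (c : Fin n) :
      Nat.card {σ : Perm (Fin n) // k ≤ (c : ℕ) ∧ ¬ ContainsPat σ p321 ∧ SortedBelow (c + 1) σ} =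
        if k ≤ (c : ℕ) then sortedAvoiderCard n (c + 1) else 0 := by
    split_ifs with hc <;> simp [hc, sortedAvoiderCard]
  rw [sortedAvoiderCard, card_subtype_eq_sum_consPerm, Fin.sum_univ_succ]
  simp only [first_zero, first_succ, card_first_succ]
  rw [Fin.sum_univ_eq_sum_range (fun c => if k ≤ c then sortedAvoiderCard n (c + 1) else 0),
    ← Finset.sum_filter, Finset.range_eq_Ico, Finset.Ico_filter_le, max_eq_right (Nat.zero_le k),
    sortedAvoiderCard]

theorem sortedAvoiderCard_succ_succ (h : k < n) :
    sortedAvoiderCard (n + 1) (k + 1) =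
      sortedAvoiderCard n k + sortedAvoiderCard (n + 1) (k + 2) := by
  rw [sortedAvoiderCard_succ_succ_eq_sum, sortedAvoiderCard_succ_succ_eq_sum,
    Finset.sum_eq_sum_Ico_succ_bot h]

theorem sortedAvoiderCard_self (n : ℕ) : sortedAvoiderCard n n = 1 := by
  induction n with
  | zero => simp [sortedAvoiderCard, sortedBelow_zero, containsPat_p321_iff]
  | succ n ih => simp [sortedAvoiderCard_succ_succ_eq_sum, ih]

/-- The entry of Catalan's triangle counting, for `j ≤ n`, the lattice paths from `(0, 0)` to
`(n, j)` that stay weakly below the diagonal: by reflection, all paths minus those that cross it.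
It is valued in `ℤ` so that the subtraction does not truncate. -/
def catalanTriangle (n j : ℕ) : ℤ := ((n + j).choose n : ℤ) - (n + j).choose (n + 1)

theorem catalanTriangle_zero_right (n : ℕ) : catalanTriangle n 0 = 1 := by
  simp [catalanTriangle]

theorem catalanTriangle_self_succ (n : ℕ) : catalanTriangle n (n + 1) = 0 := by
  rw [catalanTriangle, sub_eq_zero, Nat.choose_symm_add]

theorem catalanTriangle_succ_succ (n j : ℕ) :
    catalanTriangle (n + 1) (j + 1) = catalanTriangle n (j + 1) + catalanTriangle (n + 1) j := by
  have h : n + 1 + j = n + (j + 1) := by ring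
  simp only [catalanTriangle, ← add_assoc (n + 1), h, Nat.choose_succ_succ']
  push_cast
  ring

theorem catalanTriangle_self (n : ℕ) : catalanTriangle n n = catalan n := by
  have central : ((n : ℤ) + 1) * catalan n = (n + n).choose n := by
    rw [← two_mul, ← Nat.centralBinom_eq_two_mul_choose]
    exact_mod_cast succ_mul_catalan_eq_centralBinom n
  have next_to_central : ((n + n).choose (n + 1) : ℤ) * (n + 1) = (n + n).choose n * n := by
    have h := Nat.choose_succ_right_eq (n + n) n
    rw [Nat.add_sub_cancel] at h
    exact_mod_cast h
  have succ_ne_zero : (n : ℤ) + 1 ≠ 0 := by positivity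
  apply mul_left_cancel₀ succ_ne_zero
  unfold catalanTriangle
  linear_combination -central - next_to_central

theorem sortedAvoiderCard_eq_catalanTriangle {j : ℕ} (h : k + j = n) :
    (sortedAvoiderCard n k : ℤ) = catalanTriangle n j := by
  induction j generalizing n k with
  | zero => simp [← h, sortedAvoiderCard_self, catalanTriangle_zero_right]
  | succ j ihj =>
    induction k generalizing n with
    | zero =>
      obtain rfl : n = j + 1 := by omega
      rw [← sortedAvoiderCard_one, ihj (add_comm 1 j), catalanTriangle_succ_succ,
        catalanTriangle_self_succ, zero_add]
    | succ k ihk =>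
      obtain ⟨n, rfl⟩ : ∃ m, n = m + 1 := ⟨k + (j + 1), by omega⟩
      rw [sortedAvoiderCard_succ_succ (by omega), Nat.cast_add, ihk (by omega), ihj (by omega),
        catalanTriangle_succ_succ]

theorem snCard_p321 (n : ℕ) : SnCard n p321 = catalan n := by
  have h := sortedAvoiderCard_eq_catalanTriangle (zero_add n)
  rw [catalanTriangle_self, ← snCard_p321_eq_sortedAvoiderCard] at h
  exact_mod_cast h

/-! ### Transversals of `Y_n` -/

theorem monotone_bYn (n : ℕ) : Monotone (bYn n) := by
  intro x y hxy
  unfold bYn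
  split_ifs <;> omega

theorem isTransversal_bYn_iff {π : Perm (Fin (m + 1))} :
    IsTransversal (bYn (m + 1)) π ↔ π (Fin.last m) ≠ 0 := by
  have mem_iff (i : Fin (m + 1)) :
      (i : ℕ) + 1 ≤ bYn (m + 1) (π i) ↔ (i = Fin.last m → π i ≠ 0) := by
    simp only [bYn, Fin.ext_iff, Fin.val_last, ne_eq, Fin.val_zero]
    grind
  simp [IsTransversal, mem_iff]

theorem containsPat_p321_iff_of_apply_last_eq_zero {π : Perm (Fin (m + 1))}
    (h : π (Fin.last m) = 0) :
    ContainsPat π p321 ↔ ¬ StrictMono (π ∘ Fin.castSucc) := by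
  rw [containsPat_p321_iff]
  constructor
  · rintro ⟨i, j, l, hij, hjl, -, hji⟩ hmono
    obtain ⟨j, rfl⟩ := Fin.exists_castSucc_eq.2 (Fin.ne_last_of_lt hjl)
    obtain ⟨i, rfl⟩ := Fin.exists_castSucc_eq.2 (Fin.ne_last_of_lt hij)
    exact hji.not_gt (hmono (Fin.castSucc_lt_castSucc_iff.1 hij))
  · intro hmono
    obtain ⟨i, j, hij, hji⟩ : ∃ i j, i < j ∧ π (Fin.castSucc j) ≤ π (Fin.castSucc i) := by
      simpa [StrictMono] using hmono
    have last_lt : π (Fin.last m) < π (Fin.castSucc j) := by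
      rw [h, Fin.pos_iff_ne_zero, ← h]
      exact π.injective.ne (Fin.castSucc_lt_last j).ne
    have desc : π (Fin.castSucc j) < π (Fin.castSucc i) :=
      hji.lt_of_ne (π.injective.ne (Fin.castSucc_injective m |>.ne hij.ne'))
    exact ⟨i.castSucc, j.castSucc, Fin.last m, Fin.castSucc_lt_castSucc_iff.2 hij,
      Fin.castSucc_lt_last j, last_lt, desc⟩

theorem eq_finRotate_iff {π : Perm (Fin (m + 1))} :
    π = finRotate (m + 1) ↔ π (Fin.last m) = 0 ∧ StrictMono (π ∘ Fin.castSucc) := by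
  constructor
  · rintro rfl
    exact ⟨finRotate_last, fun i j hij => by simpa [Fin.coeSucc_eq_succ] using hij⟩
  · rintro ⟨hlast, hmono⟩
    have range_eq : Set.range (π ∘ Fin.castSucc) = Set.range Fin.succ := by
      rw [Set.range_comp, ← Fin.succAbove_last, Fin.range_succAbove,
        Set.image_compl_eq π.bijective, Set.image_singleton, hlast, Fin.range_succ]
    have castSucc_eq : π ∘ Fin.castSucc = Fin.succ :=
      (hmono.range_inj Fin.strictMono_succ).1 range_eq
    ext1 i
    cases i using Fin.lastCases with
    | last => rw [hlast, finRotate_last]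
    | cast i => rw [finRotate_apply, Fin.coeSucc_eq_succ, ← castSucc_eq, Function.comp_apply]

theorem not_containsPat_p321_and_apply_last_eq_zero_iff {π : Perm (Fin (m + 1))} :
    ¬ ContainsPat π p321 ∧ π (Fin.last m) = 0 ↔ π = finRotate (m + 1) := by
  rw [eq_finRotate_iff, and_comm]
  exact and_congr_right fun h => by rw [containsPat_p321_iff_of_apply_last_eq_zero h, not_not]

theorem stmt16 (n : ℕ) (hn : 2 ≤ n) :
    SYcard (bYn n) p321 = catalan n - 1 := by
  obtain ⟨m, rfl⟩ : ∃ m, n = m + 1 := ⟨n - 1, by omega⟩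
  let avoiders : Set (Perm (Fin (m + 1))) := {π | ¬ ContainsPat π p321}
  have avoids_iff (π : Perm (Fin (m + 1))) :
      IsTransversal (bYn (m + 1)) π ∧ ¬ ContainsIn (bYn (m + 1)) π p321 ↔
        π ∈ avoiders \ {finRotate (m + 1)} :=
    calc _ ↔ IsTransversal (bYn (m + 1)) π ∧ ¬ ContainsPat π p321 :=
          and_congr_right fun hπ => not_congr <|
            containsIn_iff_containsPat_of_apply_last_eq_zero (monotone_bYn _) hπ rfl
      _ ↔ ¬ ContainsPat π p321 ∧ ¬ π = finRotate (m + 1) := by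
          rw [isTransversal_bYn_iff, ← not_containsPat_p321_and_apply_last_eq_zero_iff]
          tauto
  have rotate_mem : finRotate (m + 1) ∈ avoiders :=
    (not_containsPat_p321_and_apply_last_eq_zero_iff.2 rfl).1
  calc SYcard (bYn (m + 1)) p321 = (avoiders \ {finRotate (m + 1)}).ncard := by
        simp only [SYcard, avoids_iff, Nat.card_coe_set_eq]
    _ = SnCard (m + 1) p321 - 1 := Set.ncard_sdiff_singleton_of_mem rotate_mem
    _ = catalan (m + 1) - 1 := by rw [snCard_p321]
end

section
/- For every n ≥ 3, |S_{St³_n}(213)| = 2^{n−3}·(n+2); and for every n ≥ 1, |S_{St³_n}(123)| = |S_{St³_n}(312)| = f_{2n−1}. -/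
/-!
If the lowest row of a Young diagram has `k` cells, a transversal is a transversal of the smaller
diagram with a new lowest dot inserted in one of the first `k` columns. An occurrence of a pattern
of length `k` through the lowest dot must occupy exactly these `k` columns. Hence, writing the
pattern itself as `τ` with a lowest dot inserted in column `q`, inserting a lowest dot in column
`p` into an avoider `σ` creates an occurrence only if `p = q` and `σ` starts with `τ`.

For the staircases `k = 3`, and the three insertions into `a b ⋯` start with `0 a b`, `a 0 b` and
`a b 0`. Let `A` and `D` count the avoiders with a left ascent and a left descent, and `A'` and `D'`
those in the next staircase. Then

* `A' = 2 A + D`, `D' = 2 D` for `213`;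
* `A' = A + D`, `D' = A + 2 D` for `123`;
* `A' = 2 A + D`, `D' = A + D` for `312`, which is the system of `123` with `A` and `D` swapped.
-/

open Equiv

/-- The staircase `St³_n`: `b(y) = min (y+2) n` (1-indexed heights). -/
def bSt3 (n : ℕ) : Fin n → ℕ := fun y => min ((y : ℕ) + 3) n

/-- `S_Y(τ)`: the transversals of the Young diagram `b` that avoid `τ` in it. -/
def avoiders {n k : ℕ} (b : Fin n → ℕ) (τ : Perm (Fin k)) : Set (Perm (Fin n)) :=
  {π | IsTransversal b π ∧ ¬ ContainsIn b π τ}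

/-- The permutations whose first `k` entries are in the relative order of `τ`. -/
def startingWith {n k : ℕ} (hkn : k ≤ n) (τ : Perm (Fin k)) : Set (Perm (Fin n)) :=
  {π | ∀ s t, τ s < τ t ↔ π (Fin.castLE hkn s) < π (Fin.castLE hkn t)}

/-- The columns `f 0 < f 1 < …` form an occurrence of the pattern `τ` in `π` inside the Young
diagram `b`; this is the body of `ContainsIn`. -/
def IsOccurrence {n k : ℕ} (b : Fin n → ℕ) (π : Perm (Fin n)) (τ : Perm (Fin k))
    (f : Fin k → Fin n) : Prop :=
  StrictMono f ∧ (∀ s t, τ s < τ t ↔ π (f s) < π (f t)) ∧ ∀ s t, (f s : ℕ) + 1 ≤ b (π (f t))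

/-- The Young diagram left after deleting the lowest row of `b` and one of the columns that meet
it. Every such column has full height, so all remaining rows lose one cell. -/
def removeLowest {n : ℕ} (b : Fin (n + 1) → ℕ) : Fin n → ℕ := fun y ↦ b y.succ - 1

/-- The permutation obtained from `σ` by inserting a new lowest dot in column `p`. -/
def insertLowest {n : ℕ} (p : Fin (n + 1)) (σ : Perm (Fin n)) : Perm (Fin (n + 1)) :=
  p.cycleRange.trans (Perm.decomposeFin.symm (0, σ))

lemma SYcard_eq_ncard_avoiders {n k : ℕ} (b : Fin n → ℕ) (τ : Perm (Fin k)) :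
    SYcard b τ = (avoiders b τ).ncard := rfl

section InsertLowest

variable {n : ℕ}

@[simp]
lemma insertLowest_self (p : Fin (n + 1)) (σ : Perm (Fin n)) : insertLowest p σ p = 0 := by
  simp [insertLowest]

@[simp]
lemma insertLowest_succAbove (p : Fin (n + 1)) (σ : Perm (Fin n)) (i : Fin n) :
    insertLowest p σ (p.succAbove i) = (σ i).succ := by
  simp [insertLowest]

lemma insertLowest_bijective (n : ℕ) :
    Function.Bijective fun x : (_ : Fin (n + 1)) × Perm (Fin n) ↦ insertLowest x.1 x.2 := by
  rw [Fintype.bijective_iff_injective_and_card]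
  refine ⟨?_, by simp [Fintype.card_perm, Nat.factorial_succ]⟩
  rintro ⟨p, σ⟩ ⟨q, ρ⟩ (h : insertLowest p σ = insertLowest q ρ)
  obtain rfl : p = q := (insertLowest p σ).injective <| by
    rw [insertLowest_self, h, insertLowest_self]
  obtain rfl : σ = ρ := Equiv.ext fun i ↦ Fin.succ_injective _ <| by
    rw [← insertLowest_succAbove p σ, h, insertLowest_succAbove]
  rfl

lemma ncard_eq_sum_ncard_preimage_insertLowest (S : Set (Perm (Fin (n + 1)))) :
    S.ncard = ∑ p, (insertLowest p ⁻¹' S).ncard := by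
  obtain ⟨hinj, hsurj⟩ := insertLowest_bijective n
  have hbij : Function.Bijective fun x : (p : Fin (n + 1)) × (insertLowest p ⁻¹' S) ↦
      (⟨insertLowest x.1 x.2, x.2.2⟩ : S) := by
    refine ⟨?_, ?_⟩
    · rintro ⟨p, σ, hσ⟩ ⟨q, ρ, hρ⟩ h
      cases @hinj ⟨p, σ⟩ ⟨q, ρ⟩ (congrArg Subtype.val h)
      rfl
    · rintro ⟨π, hπ⟩
      obtain ⟨⟨p, σ⟩, rfl⟩ := hsurj π
      exact ⟨⟨p, σ, hπ⟩, rfl⟩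
  simp only [← Nat.card_coe_set_eq]
  rw [← Nat.card_sigma, Nat.card_eq_of_bijective _ hbij]

lemma isOccurrence_castLE_iff {k : ℕ} {b : Fin n → ℕ} {π : Perm (Fin n)} {τ : Perm (Fin k)}
    (hkn : k ≤ n) (hkb : ∀ y, k ≤ b y) :
    IsOccurrence b π τ (Fin.castLE hkn) ↔ π ∈ startingWith hkn τ :=
  ⟨fun h ↦ h.2.1, fun h ↦ ⟨Fin.strictMono_castLE hkn, h, fun s _ ↦ s.isLt.trans_le (hkb _)⟩⟩

lemma eq_castLE_of_strictMono {k : ℕ} {f : Fin k → Fin n} (hf : StrictMono f) (hkn : k ≤ n)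
    (hfk : ∀ s, (f s : ℕ) < k) : f = Fin.castLE hkn := by
  have hg : StrictMono fun s ↦ (⟨f s, hfk s⟩ : Fin k) := fun _ _ h ↦ hf h
  funext s
  have hs : (f s : ℕ) = s := congrArg Fin.val (congrFun hg.eq_id s)
  exact Fin.ext hs

lemma val_succAbove_lt_iff {p : Fin (n + 1)} {m : ℕ} (hp : (p : ℕ) < m) (i : Fin n) :
    (p.succAbove i : ℕ) < m ↔ (i : ℕ) < m - 1 := by
  rcases Fin.castSucc_lt_or_lt_succ p i with h | h
  · rw [Fin.succAbove_of_castSucc_lt _ _ h, Fin.val_castSucc]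
    rw [Fin.lt_def, Fin.val_castSucc] at h
    omega
  · rw [Fin.succAbove_of_lt_succ _ _ h, Fin.val_succ]
    omega

lemma castLE_succAbove {k : ℕ} (hkn : k + 1 ≤ n + 1) (q : Fin (k + 1)) (i : Fin k) :
    Fin.castLE hkn (q.succAbove i) =
      (Fin.castLE hkn q).succAbove (Fin.castLE (Nat.le_of_succ_le_succ hkn) i) := by
  ext
  simp [Fin.succAbove, Fin.lt_def, apply_ite]

lemma insertLowest_mem_startingWith_iff {k : ℕ} (hkn : k + 1 ≤ n + 1) {p q : Fin (k + 1)}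
    {σ : Perm (Fin n)} {τ : Perm (Fin k)} :
    insertLowest (Fin.castLE hkn p) σ ∈ startingWith hkn (insertLowest q τ) ↔
      p = q ∧ σ ∈ startingWith (Nat.le_of_succ_le_succ hkn) τ := by
  constructor
  · intro h
    have hqp := h q p
    obtain rfl : p = q := by
      by_contra hpq
      obtain ⟨i, rfl⟩ := Fin.exists_succAbove_eq hpq
      simp at hqp
    refine ⟨rfl, fun s t ↦ ?_⟩
    simpa [castLE_succAbove] using h (p.succAbove s) (p.succAbove t)
  · rintro ⟨rfl, h⟩
    simpa [startingWith, Fin.forall_iff_succAbove p, castLE_succAbove] using h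

section Avoiders

variable {b : Fin (n + 1) → ℕ} {p : Fin (n + 1)} {σ : Perm (Fin n)}

lemma isTransversal_insertLowest_iff (hb : Monotone b) :
    IsTransversal b (insertLowest p σ) ↔ (p : ℕ) < b 0 ∧ IsTransversal (removeLowest b) σ := by
  simp only [IsTransversal, removeLowest, Fin.forall_iff_succAbove p, insertLowest_self,
    insertLowest_succAbove, Nat.succ_le_iff]
  exact and_congr_right fun hp ↦ forall_congr' fun i ↦
    val_succAbove_lt_iff (hp.trans_le (hb (Fin.zero_le _))) i

variable {k : ℕ} {τ : Perm (Fin k)}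

lemma isOccurrence_succAbove_comp_iff (hb : Monotone b) (hp : (p : ℕ) < b 0) {g : Fin k → Fin n} :
    IsOccurrence b (insertLowest p σ) τ (p.succAbove ∘ g) ↔
      IsOccurrence (removeLowest b) σ τ g := by
  have hcell : ∀ i y, (p.succAbove i : ℕ) < b (Fin.succ y) ↔ (i : ℕ) < b y.succ - 1 := fun i y ↦
    val_succAbove_lt_iff (hp.trans_le (hb (Fin.zero_le _))) i
  simp only [IsOccurrence, removeLowest, StrictMono, Function.comp_apply, insertLowest_succAbove,
    Fin.succAbove_lt_succAbove_iff, Fin.succ_lt_succ_iff, Nat.succ_le_iff, hcell]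

/-- An occurrence through the lowest dot must fit into the `k` cells of the lowest row. -/
lemma containsIn_insertLowest_iff (hb : Monotone b) (h0 : b 0 = k) (hkn : k ≤ n + 1)
    (hp : (p : ℕ) < k) :
    ContainsIn b (insertLowest p σ) τ ↔
      ContainsIn (removeLowest b) σ τ ∨ insertLowest p σ ∈ startingWith hkn τ := by
  subst h0
  constructor
  · rintro ⟨f, hf⟩
    by_cases hpf : p ∈ Set.range f
    · obtain ⟨t, rfl⟩ := hpf
      have hfk : ∀ s, (f s : ℕ) < b 0 := fun s ↦ by simpa using hf.2.2 s t
      obtain rfl := eq_castLE_of_strictMono hf.1 hkn hfk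
      exact .inr hf.2.1
    · choose g hg using fun s ↦ Fin.exists_succAbove_eq fun h ↦ hpf ⟨s, h⟩
      obtain rfl : p.succAbove ∘ g = f := funext hg
      exact .inl ⟨g, (isOccurrence_succAbove_comp_iff hb hp).1 hf⟩
  · rintro (⟨g, hg⟩ | h)
    · exact ⟨_, (isOccurrence_succAbove_comp_iff hb hp).2 hg⟩
    · exact ⟨_, (isOccurrence_castLE_iff hkn fun y ↦ hb (Fin.zero_le y)).2 h⟩

lemma insertLowest_mem_avoiders_iff (hb : Monotone b) (h0 : b 0 = k) (hkn : k ≤ n + 1) :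
    insertLowest p σ ∈ avoiders b τ ↔
      (p : ℕ) < k ∧ σ ∈ avoiders (removeLowest b) τ ∧ insertLowest p σ ∉ startingWith hkn τ := by
  simp only [avoiders, Set.mem_ofPred_eq, isTransversal_insertLowest_iff hb, h0, and_assoc]
  refine and_congr_right fun hp ↦ ?_
  rw [containsIn_insertLowest_iff hb h0 hkn hp, not_or]

lemma ncard_eq_sum_ncard_preimage_insertLowest_castLE (h0 : b 0 = k) (hkn : k ≤ n + 1)
    {S : Set (Perm (Fin (n + 1)))} (hS : ∀ π ∈ S, IsTransversal b π) :
    S.ncard = ∑ p : Fin k, (insertLowest (Fin.castLE hkn p) ⁻¹' S).ncard := by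
  have hout : ∀ p : Fin (n + 1), p ∉ Finset.univ.map (Fin.castLEEmb hkn) →
      (insertLowest p ⁻¹' S).ncard = 0 := by
    intro p hp
    rw [Set.ncard_eq_zero, Set.eq_empty_iff_forall_notMem]
    intro σ hσ
    have hpk : (p : ℕ) < k := by simpa [h0] using hS _ hσ p
    exact hp (by simpa using ⟨⟨p, hpk⟩, rfl⟩)
  rw [ncard_eq_sum_ncard_preimage_insertLowest,
    ← Finset.sum_subset (Finset.subset_univ _) fun p _ ↦ hout p, Finset.sum_map]
  rfl

end Avoiders

lemma preimage_insertLowest_avoiders_of_ne {k : ℕ} {b : Fin (n + 1) → ℕ} {τ : Perm (Fin k)}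
    (hb : Monotone b) (h0 : b 0 = k + 1) (hkn : k + 1 ≤ n + 1) {p q : Fin (k + 1)} (hpq : p ≠ q) :
    insertLowest (Fin.castLE hkn p) ⁻¹' avoiders b (insertLowest q τ) =
      avoiders (removeLowest b) (insertLowest q τ) := by
  ext σ
  simp [insertLowest_mem_avoiders_iff hb h0 hkn, insertLowest_mem_startingWith_iff, hpq, p.is_le]

lemma preimage_insertLowest_avoiders_self {k : ℕ} {b : Fin (n + 1) → ℕ} {τ : Perm (Fin k)}
    (hb : Monotone b) (h0 : b 0 = k + 1) (hkn : k + 1 ≤ n + 1) (q : Fin (k + 1)) :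
    insertLowest (Fin.castLE hkn q) ⁻¹' avoiders b (insertLowest q τ) =
      avoiders (removeLowest b) (insertLowest q τ) \
        startingWith (Nat.le_of_succ_le_succ hkn) τ := by
  ext σ
  simp [insertLowest_mem_avoiders_iff hb h0 hkn, insertLowest_mem_startingWith_iff, q.is_le]

end InsertLowest

section LeftAscents

/-- The permutations whose two leftmost entries are increasing. -/
def leftAscents (n : ℕ) : Set (Perm (Fin (n + 2))) := {π | π 0 < π 1}

lemma startingWith_one {n : ℕ} (h : 2 ≤ n + 2) :
    startingWith h (1 : Perm (Fin 2)) = leftAscents n := by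
  ext π
  have hcol : Fin.castLE h 1 = 1 := rfl
  simp only [startingWith, leftAscents, Set.mem_ofPred_eq, Fin.forall_fin_two, Fin.castLE_zero,
    hcol]
  simp +contextual [le_of_lt]

lemma startingWith_swap {n : ℕ} (h : 2 ≤ n + 2) :
    startingWith h (swap 0 1 : Perm (Fin 2)) = (leftAscents n)ᶜ := by
  ext π
  have h01 : π 0 ≠ π 1 := π.injective.ne Fin.zero_ne_one
  have hcol : Fin.castLE h 1 = 1 := rfl
  simp only [startingWith, leftAscents, Set.mem_ofPred_eq, Set.mem_compl_iff,
    Fin.forall_fin_two, Fin.castLE_zero, hcol]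
  simp +contextual [h01.symm.le_iff_lt]

lemma preimage_insertLowest_zero_leftAscents (n : ℕ) :
    insertLowest 0 ⁻¹' leftAscents n = Set.univ := by
  ext σ
  have h1 : insertLowest 0 σ 1 = (σ 0).succ := insertLowest_succAbove 0 σ 0
  simp [leftAscents, h1]

lemma preimage_insertLowest_one_leftAscents (n : ℕ) :
    insertLowest 1 ⁻¹' leftAscents n = ∅ := by
  ext σ
  simp [leftAscents]

lemma preimage_insertLowest_two_leftAscents (n : ℕ) :
    insertLowest 2 ⁻¹' leftAscents (n + 1) = leftAscents n := by
  ext σ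
  have h0 : insertLowest 2 σ 0 = (σ 0).succ := insertLowest_succAbove 2 σ 0
  have h1 : insertLowest 2 σ 1 = (σ 1).succ := insertLowest_succAbove 2 σ 1
  simp [leftAscents, h0, h1]

variable {n k : ℕ}

lemma forall_val_eq_zero_one {P : Fin (n + 2) → Fin (n + 2) → Prop} :
    (∀ i j : Fin (n + 2), (i : ℕ) = 0 → (j : ℕ) = 1 → P i j) ↔ P 0 1 := by
  refine ⟨fun h ↦ h 0 1 rfl rfl, fun h i j hi hj ↦ ?_⟩
  obtain rfl : i = 0 := Fin.ext hi
  obtain rfl : j = 1 := Fin.ext hj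
  exact h

lemma SYcardLeftAsc_eq_ncard (b : Fin (n + 2) → ℕ) (τ : Perm (Fin k)) :
    SYcardLeftAsc b τ = (avoiders b τ ∩ leftAscents n).ncard :=
  Nat.card_congr <| Equiv.subtypeEquivRight fun π ↦ by
    rw [forall_val_eq_zero_one, ← and_assoc]
    rfl

lemma SYcardLeftDesc_eq_ncard (b : Fin (n + 2) → ℕ) (τ : Perm (Fin k)) :
    SYcardLeftDesc b τ = (avoiders b τ \ leftAscents n).ncard :=
  Nat.card_congr <| Equiv.subtypeEquivRight fun π ↦ by
    have h01 : π 0 ≠ π 1 := π.injective.ne Fin.zero_ne_one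
    rw [forall_val_eq_zero_one, ← and_assoc, ← h01.symm.le_iff_lt, ← not_lt]
    rfl

lemma ncard_avoiders_eq_add (b : Fin (n + 2) → ℕ) (τ : Perm (Fin k)) :
    (avoiders b τ).ncard = SYcardLeftAsc b τ + SYcardLeftDesc b τ := by
  rw [SYcardLeftAsc_eq_ncard, SYcardLeftDesc_eq_ncard, Set.ncard_inter_add_ncard_sdiff_eq_ncard]

end LeftAscents

section Recurrences

variable {n : ℕ} {b : Fin (n + 3) → ℕ}

lemma ncard_eq_add_ncard_preimage_insertLowest (h0 : b 0 = 3) {S : Set (Perm (Fin (n + 3)))}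
    (hS : ∀ π ∈ S, IsTransversal b π) :
    S.ncard = (insertLowest 0 ⁻¹' S).ncard + (insertLowest 1 ⁻¹' S).ncard +
      (insertLowest 2 ⁻¹' S).ncard := by
  rw [ncard_eq_sum_ncard_preimage_insertLowest_castLE h0 (Nat.le_add_left 3 n) hS,
    Fin.sum_univ_three]
  rfl

lemma SYcardLeftAsc_insertLowest (hb : Monotone b) (h0 : b 0 = 3) {q : Fin 3} (hq : q ≠ 2)
    (τ : Perm (Fin 2)) :
    SYcardLeftAsc b (insertLowest q τ) =
      (insertLowest 0 ⁻¹' avoiders b (insertLowest q τ)).ncard +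
        SYcardLeftAsc (removeLowest b) (insertLowest q τ) := by
  have h2 : insertLowest 2 ⁻¹' avoiders b (insertLowest q τ) =
      avoiders (removeLowest b) (insertLowest q τ) :=
    preimage_insertLowest_avoiders_of_ne hb h0 (Nat.le_add_left 3 n) (p := 2) hq.symm
  rw [SYcardLeftAsc_eq_ncard, SYcardLeftAsc_eq_ncard,
    ncard_eq_add_ncard_preimage_insertLowest h0 fun π hπ ↦ hπ.1.1]
  simp only [Set.preimage_inter, preimage_insertLowest_zero_leftAscents,
    preimage_insertLowest_one_leftAscents, preimage_insertLowest_two_leftAscents, Set.inter_univ,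
    Set.inter_empty, Set.ncard_empty, add_zero, h2]

lemma SYcardLeftDesc_insertLowest (hb : Monotone b) (h0 : b 0 = 3) {q : Fin 3} (hq : q ≠ 2)
    (τ : Perm (Fin 2)) :
    SYcardLeftDesc b (insertLowest q τ) =
      (insertLowest 1 ⁻¹' avoiders b (insertLowest q τ)).ncard +
        SYcardLeftDesc (removeLowest b) (insertLowest q τ) := by
  have h2 : insertLowest 2 ⁻¹' avoiders b (insertLowest q τ) =
      avoiders (removeLowest b) (insertLowest q τ) :=
    preimage_insertLowest_avoiders_of_ne hb h0 (Nat.le_add_left 3 n) (p := 2) hq.symm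
  rw [SYcardLeftDesc_eq_ncard, SYcardLeftDesc_eq_ncard,
    ncard_eq_add_ncard_preimage_insertLowest h0 fun π hπ ↦ hπ.1.1]
  simp only [Set.preimage_sdiff, preimage_insertLowest_zero_leftAscents,
    preimage_insertLowest_one_leftAscents, preimage_insertLowest_two_leftAscents, Set.sdiff_univ,
    Set.sdiff_empty, Set.ncard_empty, zero_add, h2]

lemma SYcardLeftAsc_insertLowest_one (hb : Monotone b) (h0 : b 0 = 3) (τ : Perm (Fin 2)) :
    SYcardLeftAsc b (insertLowest 1 τ) =
      2 * SYcardLeftAsc (removeLowest b) (insertLowest 1 τ) +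
        SYcardLeftDesc (removeLowest b) (insertLowest 1 τ) := by
  have h : insertLowest 0 ⁻¹' avoiders b (insertLowest 1 τ) =
      avoiders (removeLowest b) (insertLowest 1 τ) :=
    preimage_insertLowest_avoiders_of_ne hb h0 (Nat.le_add_left 3 n) (p := 0) (q := 1) (by decide)
  rw [SYcardLeftAsc_insertLowest hb h0 (by decide), h, ncard_avoiders_eq_add]
  ring

lemma SYcardLeftDesc_insertLowest_one_one (hb : Monotone b) (h0 : b 0 = 3) :
    SYcardLeftDesc b (insertLowest 1 (1 : Perm (Fin 2))) =
      2 * SYcardLeftDesc (removeLowest b) (insertLowest 1 (1 : Perm (Fin 2))) := by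
  have h : insertLowest 1 ⁻¹' avoiders b (insertLowest 1 (1 : Perm (Fin 2))) = _ :=
    preimage_insertLowest_avoiders_self hb h0 (Nat.le_add_left 3 n) 1
  rw [SYcardLeftDesc_insertLowest hb h0 (by decide), h, startingWith_one,
    ← SYcardLeftDesc_eq_ncard]
  ring

lemma SYcardLeftDesc_insertLowest_one_swap (hb : Monotone b) (h0 : b 0 = 3) :
    SYcardLeftDesc b (insertLowest 1 (swap 0 1 : Perm (Fin 2))) =
      SYcardLeftAsc (removeLowest b) (insertLowest 1 (swap 0 1 : Perm (Fin 2))) +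
        SYcardLeftDesc (removeLowest b) (insertLowest 1 (swap 0 1 : Perm (Fin 2))) := by
  have h : insertLowest 1 ⁻¹' avoiders b (insertLowest 1 (swap 0 1 : Perm (Fin 2))) = _ :=
    preimage_insertLowest_avoiders_self hb h0 (Nat.le_add_left 3 n) 1
  rw [SYcardLeftDesc_insertLowest hb h0 (by decide), h, startingWith_swap,
    Set.sdiff_eq, compl_compl, ← SYcardLeftAsc_eq_ncard]

lemma SYcardLeftAsc_insertLowest_zero_one (hb : Monotone b) (h0 : b 0 = 3) :
    SYcardLeftAsc b (insertLowest 0 (1 : Perm (Fin 2))) =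
      SYcardLeftAsc (removeLowest b) (insertLowest 0 (1 : Perm (Fin 2))) +
        SYcardLeftDesc (removeLowest b) (insertLowest 0 (1 : Perm (Fin 2))) := by
  have h : insertLowest 0 ⁻¹' avoiders b (insertLowest 0 (1 : Perm (Fin 2))) = _ :=
    preimage_insertLowest_avoiders_self hb h0 (Nat.le_add_left 3 n) 0
  rw [SYcardLeftAsc_insertLowest hb h0 (by decide), h, startingWith_one,
    ← SYcardLeftDesc_eq_ncard, add_comm]

lemma SYcardLeftDesc_insertLowest_zero (hb : Monotone b) (h0 : b 0 = 3) (τ : Perm (Fin 2)) :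
    SYcardLeftDesc b (insertLowest 0 τ) =
      SYcardLeftAsc (removeLowest b) (insertLowest 0 τ) +
        2 * SYcardLeftDesc (removeLowest b) (insertLowest 0 τ) := by
  have h : insertLowest 1 ⁻¹' avoiders b (insertLowest 0 τ) =
      avoiders (removeLowest b) (insertLowest 0 τ) :=
    preimage_insertLowest_avoiders_of_ne hb h0 (Nat.le_add_left 3 n) (p := 1) (q := 0) (by decide)
  rw [SYcardLeftDesc_insertLowest hb h0 (by decide), h, ncard_avoiders_eq_add]
  ring

end Recurrences

section Staircase

lemma p123_eq_insertLowest : p123 = insertLowest 0 1 := by decide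

lemma p213_eq_insertLowest : p213 = insertLowest 1 1 := by decide

lemma p312_eq_insertLowest : p312 = insertLowest 1 (swap 0 1) := by decide

lemma monotone_bSt3 (n : ℕ) : Monotone (bSt3 n) := fun _ _ hxy ↦
  min_le_min_right n (Nat.add_le_add_right hxy 3)

lemma bSt3_add_three_zero (n : ℕ) : bSt3 (n + 3) 0 = 3 := by
  simp [bSt3]

lemma removeLowest_bSt3 (n : ℕ) : removeLowest (bSt3 (n + 1)) = bSt3 n := by
  funext y
  simp only [removeLowest, bSt3, Fin.val_succ]
  omega

lemma avoiders_eq_univ {n k : ℕ} {b : Fin n → ℕ} (hb : ∀ y, n ≤ b y) (hnk : n < k)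
    (τ : Perm (Fin k)) : avoiders b τ = Set.univ := by
  refine Set.eq_univ_of_forall fun π ↦ ⟨fun i ↦ i.isLt.trans_le (hb _), ?_⟩
  rintro ⟨f, hf, -⟩
  exact hnk.not_ge (by simpa using Fintype.card_le_of_injective f hf.injective)

lemma SYcard_bSt3_one (τ : Perm (Fin 3)) : SYcard (bSt3 1) τ = 1 := by
  rw [SYcard_eq_ncard_avoiders, avoiders_eq_univ (by decide) (by decide), Set.ncard_univ]
  simp

lemma SYcardLeftAsc_bSt3_two (τ : Perm (Fin 3)) : SYcardLeftAsc (bSt3 2) τ = 1 := by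
  have h : leftAscents 0 = {1} := by
    ext π
    simp only [leftAscents, Set.mem_ofPred_eq, Set.mem_singleton_iff]
    decide +revert
  rw [SYcardLeftAsc_eq_ncard, avoiders_eq_univ (by decide) (by decide), Set.univ_inter, h,
    Set.ncard_singleton]

lemma SYcardLeftDesc_bSt3_two (τ : Perm (Fin 3)) : SYcardLeftDesc (bSt3 2) τ = 1 := by
  have h : (leftAscents 0)ᶜ = {swap 0 1} := by
    ext π
    simp only [leftAscents, Set.mem_compl_iff, Set.mem_ofPred_eq, Set.mem_singleton_iff]
    decide +revert
  rw [SYcardLeftDesc_eq_ncard, avoiders_eq_univ (by decide) (by decide), ← Set.compl_eq_univ_sdiff,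
    h, Set.ncard_singleton]

lemma SYcardLeftDesc_bSt3_p213 (n : ℕ) : SYcardLeftDesc (bSt3 (n + 2)) p213 = 2 ^ n := by
  induction n with
  | zero => exact SYcardLeftDesc_bSt3_two _
  | succ n ih =>
    rw [p213_eq_insertLowest] at ih ⊢
    rw [SYcardLeftDesc_insertLowest_one_one (monotone_bSt3 _) (bSt3_add_three_zero n),
      removeLowest_bSt3, ih, pow_succ']

lemma SYcardLeftAsc_bSt3_p213 (n : ℕ) :
    SYcardLeftAsc (bSt3 (n + 3)) p213 = 2 ^ n * (n + 3) := by
  have hrec (m : ℕ) : SYcardLeftAsc (bSt3 (m + 3)) p213 =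
      2 * SYcardLeftAsc (bSt3 (m + 2)) p213 + 2 ^ m := by
    rw [← SYcardLeftDesc_bSt3_p213, p213_eq_insertLowest,
      SYcardLeftAsc_insertLowest_one (monotone_bSt3 _) (bSt3_add_three_zero m), removeLowest_bSt3]
  induction n with
  | zero => rw [hrec, SYcardLeftAsc_bSt3_two]; rfl
  | succ n ih =>
    rw [hrec, ih]
    ring

lemma eq_fib_of_recurrence {x y : ℕ → ℕ} (hx0 : x 0 = 1) (hy0 : y 0 = 1)
    (hx : ∀ n, x (n + 1) = x n + y n) (hy : ∀ n, y (n + 1) = x n + 2 * y n) (n : ℕ) :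
    x n = Nat.fib (2 * n + 1) ∧ y n = Nat.fib (2 * n + 2) := by
  induction n with
  | zero => exact ⟨hx0, hy0⟩
  | succ n ih =>
    have h3 : Nat.fib (2 * n + 3) = Nat.fib (2 * n + 1) + Nat.fib (2 * n + 2) := Nat.fib_add_two
    have h4 : Nat.fib (2 * n + 4) = Nat.fib (2 * n + 2) + Nat.fib (2 * n + 3) := Nat.fib_add_two
    rw [hx, hy, ih.1, ih.2, mul_add_one, h3, h4, h3]
    exact ⟨rfl, by ring⟩

lemma add_eq_fib_of_recurrence {x y : ℕ → ℕ} (hx0 : x 0 = 1) (hy0 : y 0 = 1)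
    (hx : ∀ n, x (n + 1) = x n + y n) (hy : ∀ n, y (n + 1) = x n + 2 * y n) (n : ℕ) :
    x n + y n = Nat.fib (2 * n + 3) := by
  rw [← hx, (eq_fib_of_recurrence hx0 hy0 hx hy (n + 1)).1, mul_add_one]

lemma SYcard_bSt3_p213 (n : ℕ) : SYcard (bSt3 (n + 3)) p213 = 2 ^ n * (n + 5) := by
  rw [SYcard_eq_ncard_avoiders, ncard_avoiders_eq_add, SYcardLeftAsc_bSt3_p213,
    SYcardLeftDesc_bSt3_p213 (n + 1)]
  ring

lemma SYcard_bSt3_p123 (n : ℕ) : SYcard (bSt3 (n + 2)) p123 = Nat.fib (2 * n + 3) := by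
  rw [SYcard_eq_ncard_avoiders, ncard_avoiders_eq_add, p123_eq_insertLowest]
  refine add_eq_fib_of_recurrence (x := fun m ↦ SYcardLeftAsc (bSt3 (m + 2)) _)
    (y := fun m ↦ SYcardLeftDesc (bSt3 (m + 2)) _) (SYcardLeftAsc_bSt3_two _)
    (SYcardLeftDesc_bSt3_two _) (fun m ↦ ?_) (fun m ↦ ?_) n
  · rw [SYcardLeftAsc_insertLowest_zero_one (monotone_bSt3 _) (bSt3_add_three_zero m),
      removeLowest_bSt3]
  · rw [SYcardLeftDesc_insertLowest_zero (monotone_bSt3 _) (bSt3_add_three_zero m),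
      removeLowest_bSt3]

lemma SYcard_bSt3_p312 (n : ℕ) : SYcard (bSt3 (n + 2)) p312 = Nat.fib (2 * n + 3) := by
  rw [SYcard_eq_ncard_avoiders, ncard_avoiders_eq_add, p312_eq_insertLowest, add_comm]
  refine add_eq_fib_of_recurrence (x := fun m ↦ SYcardLeftDesc (bSt3 (m + 2)) _)
    (y := fun m ↦ SYcardLeftAsc (bSt3 (m + 2)) _) (SYcardLeftDesc_bSt3_two _)
    (SYcardLeftAsc_bSt3_two _) (fun m ↦ ?_) (fun m ↦ ?_) n
  · rw [SYcardLeftDesc_insertLowest_one_swap (monotone_bSt3 _) (bSt3_add_three_zero m),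
      removeLowest_bSt3, add_comm]
  · rw [SYcardLeftAsc_insertLowest_one (monotone_bSt3 _) (bSt3_add_three_zero m),
      removeLowest_bSt3, add_comm]

end Staircase

theorem stmt19 :
    (∀ n : ℕ, 3 ≤ n → SYcard (bSt3 n) p213 = 2 ^ (n - 3) * (n + 2)) ∧
    (∀ n : ℕ, 1 ≤ n →
      SYcard (bSt3 n) p123 = Nat.fib (2 * n - 1) ∧
      SYcard (bSt3 n) p312 = Nat.fib (2 * n - 1)) := by
  refine ⟨fun n hn ↦ ?_, fun n hn ↦ ?_⟩
  · obtain ⟨m, rfl⟩ := Nat.exists_eq_add_of_le' hn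
    exact SYcard_bSt3_p213 m
  · match n, hn with
    | 1, _ => exact ⟨SYcard_bSt3_one _, SYcard_bSt3_one _⟩
    | m + 2, _ => exact ⟨SYcard_bSt3_p123 m, SYcard_bSt3_p312 m⟩
end
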